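/- arXiv:1701.07786 — 4 statements merged into one kernel-verified Lean document; each statement's English description precedes it below -/
import Mathlib

section
/- Let g be a Lie algebra over a field K of characteristic zero and let R : g → g be a linear map. Define the skew-symmetric bracket [x,y]_R := (1/2)([Rx,y] + [x,Ry]) and the bilinear map B_R(x,y) := R([Rx,y] + [x,Ry]) − [Rx,Ry]. Then [·,·]_R satisfies the Jacobi identity if and only if [B_R(x,y),z] + [B_R(z,x),y] + [B_R(y,z),x] = 0 for all x, y, z in g. -/
/-- The `R`-bracket `[x,y]_R := (1/2)([Rx,y] + [x,Ry])`. -/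
def rBracket {K : Type*} [Field K] {L : Type*} [LieRing L] [LieAlgebra K L]
    (R : L →ₗ[K] L) (x y : L) : L :=
  (1 / 2 : K) • (⁅R x, y⁆ + ⁅x, R y⁆)

/-- `B_R(x,y) := R([Rx,y] + [x,Ry]) − [Rx,Ry]`. -/
def yangBaxterB {K : Type*} [Field K] {L : Type*} [LieRing L] [LieAlgebra K L]
    (R : L →ₗ[K] L) (x y : L) : L :=
  R (⁅R x, y⁆ + ⁅x, R y⁆) - ⁅R x, R y⁆

/-! The double `R`-bracket `4 [[x,y]_R,z]_R` is `[B_R(x,y),z]` plus the three double brackets in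
which `R` is applied to two of `x, y, z`. Summed cyclically, those double brackets regroup into the
Jacobi identities of the triples `(Rx,Ry,z)`, `(x,Ry,Rz)` and `(Rx,y,Rz)`, and so cancel. -/

theorem lie_lie_add_cyclic_eq_zero {L : Type*} [LieRing L] (x y z : L) :
    ⁅⁅x, y⁆, z⁆ + ⁅⁅y, z⁆, x⁆ + ⁅⁅z, x⁆, y⁆ = 0 := by
  rw [← neg_eq_zero]
  simpa only [neg_add, lie_skew] using lie_jacobi z x y

theorem lie_lie_map_map_add_cyclic_eq_zero {L : Type*} [LieRing L] (f : L → L) (x y z : L) :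
    (⁅⁅f x, f y⁆, z⁆ + ⁅⁅f x, y⁆, f z⁆ + ⁅⁅x, f y⁆, f z⁆)
      + (⁅⁅f y, f z⁆, x⁆ + ⁅⁅f y, z⁆, f x⁆ + ⁅⁅y, f z⁆, f x⁆)
      + (⁅⁅f z, f x⁆, y⁆ + ⁅⁅f z, x⁆, f y⁆ + ⁅⁅z, f x⁆, f y⁆) = 0 := by
  linear_combination (norm := abel) lie_lie_add_cyclic_eq_zero (f x) (f y) z
    + lie_lie_add_cyclic_eq_zero x (f y) (f z) + lie_lie_add_cyclic_eq_zero (f x) y (f z)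

section RBracket

variable {K : Type*} [Field K] {L : Type*} [LieRing L] [LieAlgebra K L] (R : L →ₗ[K] L)

theorem rBracket_rBracket (x y z : L) :
    rBracket R (rBracket R x y) z =
      (1 / 2 : K) ^ 2 • (⁅yangBaxterB R x y, z⁆
        + (⁅⁅R x, R y⁆, z⁆ + ⁅⁅R x, y⁆, R z⁆ + ⁅⁅x, R y⁆, R z⁆)) := by
  simp only [rBracket, yangBaxterB, map_smul, smul_lie, add_lie, sub_lie]
  module

theorem rBracket_rBracket_add_cyclic (x y z : L) :
    rBracket R (rBracket R x y) z + rBracket R (rBracket R y z) x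
        + rBracket R (rBracket R z x) y =
      (1 / 2 : K) ^ 2 •
        (⁅yangBaxterB R x y, z⁆ + ⁅yangBaxterB R z x, y⁆ + ⁅yangBaxterB R y z, x⁆) := by
  simp only [rBracket_rBracket]
  linear_combination (norm := module) (1 / 2 : K) ^ 2 • lie_lie_map_map_add_cyclic_eq_zero R x y z

theorem rBracket_jacobi_iff_general [NeZero (2 : K)] :
    (∀ x y z : L,
      rBracket R (rBracket R x y) z + rBracket R (rBracket R y z) x
        + rBracket R (rBracket R z x) y = 0) ↔
    (∀ x y z : L,
      ⁅yangBaxterB R x y, z⁆ + ⁅yangBaxterB R z x, y⁆ + ⁅yangBaxterB R y z, x⁆ = 0) := by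
  have quarter_ne_zero : (1 / 2 : K) ^ 2 ≠ 0 := pow_ne_zero 2 (one_div_ne_zero two_ne_zero)
  simp only [rBracket_rBracket_add_cyclic, smul_eq_zero_iff_right quarter_ne_zero]

end RBracket

/-- For a Lie algebra `g` over a field of characteristic zero and a linear map
`R : g → g`, the skew-symmetric bracket `[x,y]_R := (1/2)([Rx,y] + [x,Ry])` satisfies the
Jacobi identity if and only if
`[B_R(x,y),z] + [B_R(z,x),y] + [B_R(y,z),x] = 0` for all `x, y, z`, where
`B_R(x,y) := R([Rx,y] + [x,Ry]) − [Rx,Ry]`. -/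
theorem rBracket_jacobi_iff
    (K : Type*) [Field K] [CharZero K]
    (L : Type*) [LieRing L] [LieAlgebra K L]
    (R : L →ₗ[K] L) :
    (∀ x y z : L,
      rBracket R (rBracket R x y) z + rBracket R (rBracket R y z) x
        + rBracket R (rBracket R z x) y = 0) ↔
    (∀ x y z : L,
      ⁅yangBaxterB R x y, z⁆ + ⁅yangBaxterB R z x, y⁆ + ⁅yangBaxterB R y z, x⁆ = 0) :=
  rBracket_jacobi_iff_general R
end

section
/- Let g be a Lie algebra over a field K of characteristic zero, let θ ∈ K, and let R : g → g be a linear map satisfying the modified classical Yang–Baxter equation with parameter θ: [Rx,Ry] = R([Rx,y] + [x,Ry]) − θ[x,y] for all x, y in g. Then the skew-symmetric bracket [x,y]_R := (1/2)([Rx,y] + [x,Ry]) satisfies the Jacobi identity, so it defines a Lie algebra structure g_R on the underlying vector space of g. -/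
/-!
For an arbitrary linear map `R`, the Jacobi identity of the original bracket at `(Rx, Ry, z)`,
`(Rx, y, Rz)` and `(x, Ry, Rz)` cancels everything in the Jacobiator of the `R`-bracket except the
cyclic sum of `⁅B(x, y), z⁆`, where `B(x, y) = ⁅Rx, Ry⁆ - R(⁅Rx, y⁆ + ⁅x, Ry⁆)`. The modified
classical Yang–Baxter equation says that `B(x, y) = -θ⁅x, y⁆`, so this cyclic sum vanishes by the
Jacobi identity at `(x, y, z)`.
-/

section

variable {A L : Type*} [CommRing A] [LieRing L] [LieAlgebra A L]

/-- The `R`-bracket with an arbitrary scalar `c` in place of `1 / 2`, which makes sense over any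
commutative ring. -/
def scaledRBracket (c : A) (R : L →ₗ[A] L) (x y : L) : L :=
  c • (⁅R x, y⁆ + ⁅x, R y⁆)

/-- The tensor `B` measuring the failure of `R` to satisfy the classical Yang–Baxter equation.
The modified equation with parameter `θ` says that it equals `-θ` times the Lie bracket. -/
def yangBaxterDefect (R : L →ₗ[A] L) (x y : L) : L :=
  ⁅R x, R y⁆ - R (⁅R x, y⁆ + ⁅x, R y⁆)

theorem lie_lie_jacobi (x y z : L) : ⁅⁅x, y⁆, z⁆ + ⁅⁅y, z⁆, x⁆ + ⁅⁅z, x⁆, y⁆ = 0 := by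
  rw [← lie_skew ⁅x, y⁆, ← lie_skew ⁅y, z⁆, ← lie_skew ⁅z, x⁆, ← neg_add, ← neg_add,
    lie_jacobi, neg_zero]

theorem scaledRBracket_skew (c : A) (R : L →ₗ[A] L) (x y : L) :
    scaledRBracket c R x y = -scaledRBracket c R y x := by
  rw [scaledRBracket, scaledRBracket, ← lie_skew (R x) y, ← lie_skew x (R y), ← smul_neg, neg_add,
    add_comm]

theorem scaledRBracket_scaledRBracket (c : A) (R : L →ₗ[A] L) (x y z : L) :
    scaledRBracket c R (scaledRBracket c R x y) z =
      (c * c) • (⁅⁅R x, R y⁆, z⁆ + ⁅⁅R x, y⁆, R z⁆ + ⁅⁅x, R y⁆, R z⁆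
        - ⁅yangBaxterDefect R x y, z⁆) := by
  simp only [scaledRBracket, yangBaxterDefect, map_smul, smul_lie, sub_lie, add_lie]
  module

theorem scaledRBracket_jacobiator (c : A) (R : L →ₗ[A] L) (x y z : L) :
    scaledRBracket c R (scaledRBracket c R x y) z + scaledRBracket c R (scaledRBracket c R y z) x
        + scaledRBracket c R (scaledRBracket c R z x) y =
      -((c * c) • (⁅yangBaxterDefect R x y, z⁆ + ⁅yangBaxterDefect R y z, x⁆
        + ⁅yangBaxterDefect R z x, y⁆)) := by
  simp only [scaledRBracket_scaledRBracket]
  linear_combination (norm := module) (c * c) • (lie_lie_jacobi (R x) (R y) z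
    + lie_lie_jacobi (R x) y (R z) + lie_lie_jacobi x (R y) (R z))

theorem yangBaxterDefect_lie_jacobi {θ : A} {R : L →ₗ[A] L}
    (hR : ∀ x y : L, yangBaxterDefect R x y = -(θ • ⁅x, y⁆)) (x y z : L) :
    ⁅yangBaxterDefect R x y, z⁆ + ⁅yangBaxterDefect R y z, x⁆
      + ⁅yangBaxterDefect R z x, y⁆ = 0 := by
  simp only [hR, neg_lie, smul_lie]
  rw [← neg_add, ← neg_add, ← smul_add, ← smul_add, lie_lie_jacobi, smul_zero, neg_zero]

theorem mcybe_rBracket_jacobi_general (c : A) {θ : A} {R : L →ₗ[A] L}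
    (hR : ∀ x y : L, ⁅R x, R y⁆ = R (⁅R x, y⁆ + ⁅x, R y⁆) - θ • ⁅x, y⁆) :
    (∀ x y : L, scaledRBracket c R x y = -scaledRBracket c R y x) ∧
    (∀ x y z : L,
      scaledRBracket c R (scaledRBracket c R x y) z + scaledRBracket c R (scaledRBracket c R y z) x
        + scaledRBracket c R (scaledRBracket c R z x) y = 0) := by
  refine ⟨scaledRBracket_skew c R, fun x y z ↦ ?_⟩
  have defect_eq (x y : L) : yangBaxterDefect R x y = -(θ • ⁅x, y⁆) := by
    rw [yangBaxterDefect, hR]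
    abel
  rw [scaledRBracket_jacobiator, yangBaxterDefect_lie_jacobi defect_eq, smul_zero, neg_zero]

end

/-- If `R : g → g` satisfies the modified classical Yang–Baxter equation with
parameter `θ`, `[Rx,Ry] = R([Rx,y] + [x,Ry]) − θ[x,y]`, then the skew-symmetric bracket
`[x,y]_R := (1/2)([Rx,y] + [x,Ry])` satisfies the Jacobi identity, hence defines a Lie algebra
structure `g_R` on the underlying vector space of `g`. -/
theorem mcybe_rBracket_jacobi
    (K : Type*) [Field K] [CharZero K]
    (L : Type*) [LieRing L] [LieAlgebra K L]
    (θ : K) (R : L →ₗ[K] L)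
    (hR : ∀ x y : L, ⁅R x, R y⁆ = R (⁅R x, y⁆ + ⁅x, R y⁆) - θ • ⁅x, y⁆) :
    (∀ x y : L, rBracket R x y = - rBracket R y x) ∧
    (∀ x y z : L,
      rBracket R (rBracket R x y) z + rBracket R (rBracket R y z) x
        + rBracket R (rBracket R z x) y = 0) :=
  mcybe_rBracket_jacobi_general (1 / 2) hR
end

section
/- Let g be a Lie algebra over a field K of characteristic zero and let R : g → g be a linear map satisfying the modified classical Yang–Baxter equation [Rx,Ry] = R([Rx,y] + [x,Ry]) − [x,y] for all x, y in g. Define R_± := (1/2)(R ± id). Then R_+ and R_− are Lie algebra morphisms from g_R to g, where g_R is the underlying vector space of g with bracket [x,y]_R := (1/2)([Rx,y] + [x,Ry]); equivalently, [R_± x, R_± y] = R_±([R_± x, y] + [x, R_± y] ∓ [x,y]) for all x, y in g. -/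
/-- `R_+ := (1/2)(R + id)`. -/
def rPlus {K : Type*} [Field K] {L : Type*} [LieRing L] [LieAlgebra K L]
    (R : L →ₗ[K] L) : L →ₗ[K] L :=
  (1 / 2 : K) • (R + LinearMap.id)

/-- `R_− := (1/2)(R − id)`. -/
def rMinus {K : Type*} [Field K] {L : Type*} [LieRing L] [LieAlgebra K L]
    (R : L →ₗ[K] L) : L →ₗ[K] L :=
  (1 / 2 : K) • (R - LinearMap.id)

section ModifiedYangBaxter

variable {K L : Type*} [CommRing K] [LieRing L] [LieAlgebra K L]

/-- The modified classical Yang–Baxter equation for `R` with parameter `θ`, over an arbitrary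
commutative ring. The case `θ = 1` is the hypothesis under which `rPlus R` and `rMinus R` are
morphisms; a square parameter `θ = c ^ 2` treats the shifts `R ± c` uniformly. -/
def SatisfiesMCYBE (θ : K) (R : L →ₗ[K] L) : Prop :=
  ∀ x y : L, ⁅R x, R y⁆ = R (⁅R x, y⁆ + ⁅x, R y⁆) - θ • ⁅x, y⁆

variable {R : L →ₗ[K] L}

theorem satisfiesMCYBE_one_iff :
    SatisfiesMCYBE (1 : K) R ↔ ∀ x y : L, ⁅R x, R y⁆ = R (⁅R x, y⁆ + ⁅x, R y⁆) - ⁅x, y⁆ := by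
  simp only [SatisfiesMCYBE, one_smul]

theorem SatisfiesMCYBE.lie_add_smul {c : K} (hR : SatisfiesMCYBE (c ^ 2) R) (x y : L) :
    ⁅R x + c • x, R y + c • y⁆ = R (⁅R x, y⁆ + ⁅x, R y⁆) + c • (⁅R x, y⁆ + ⁅x, R y⁆) :=
  calc
    ⁅R x + c • x, R y + c • y⁆ =
        ⁅R x, R y⁆ + c • (⁅R x, y⁆ + ⁅x, R y⁆) + c ^ 2 • ⁅x, y⁆ := by
      simp only [add_lie, lie_add, smul_lie, lie_smul]
      module
    _ = R (⁅R x, y⁆ + ⁅x, R y⁆) + c • (⁅R x, y⁆ + ⁅x, R y⁆) := by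
      rw [hR x y]
      abel

end ModifiedYangBaxter

section RBracket

variable {K L : Type*} [Field K] [LieRing L] [LieAlgebra K L] (R : L →ₗ[K] L)

theorem rPlus_apply (x : L) : rPlus R x = (1 / 2 : K) • (R x + x) := rfl

theorem rMinus_apply (x : L) : rMinus R x = (1 / 2 : K) • (R x - x) := rfl

variable {R} in
theorem SatisfiesMCYBE.rPlus_rBracket (hR : SatisfiesMCYBE (1 : K) R) (x y : L) :
    rPlus R (rBracket R x y) = ⁅rPlus R x, rPlus R y⁆ := by
  have hsq : SatisfiesMCYBE ((1 : K) ^ 2) R := by rwa [one_pow]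
  have lie_shift : ⁅R x + x, R y + y⁆ = R (⁅R x, y⁆ + ⁅x, R y⁆) + (⁅R x, y⁆ + ⁅x, R y⁆) := by
    simpa only [one_smul] using hsq.lie_add_smul x y
  rw [rBracket, map_smul, rPlus_apply, ← lie_shift, rPlus_apply, rPlus_apply, smul_lie, lie_smul]

variable {R} in
theorem SatisfiesMCYBE.rMinus_rBracket (hR : SatisfiesMCYBE (1 : K) R) (x y : L) :
    rMinus R (rBracket R x y) = ⁅rMinus R x, rMinus R y⁆ := by
  have hsq : SatisfiesMCYBE ((-1 : K) ^ 2) R := by rwa [neg_one_sq]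
  have lie_shift : ⁅R x - x, R y - y⁆ = R (⁅R x, y⁆ + ⁅x, R y⁆) - (⁅R x, y⁆ + ⁅x, R y⁆) := by
    simpa only [neg_one_smul, ← sub_eq_add_neg] using hsq.lie_add_smul x y
  rw [rBracket, map_smul, rMinus_apply, ← lie_shift, rMinus_apply, rMinus_apply, smul_lie,
    lie_smul]

variable [NeZero (2 : K)]

theorem rBracket_eq_lie_rPlus (x y : L) :
    rBracket R x y = ⁅rPlus R x, y⁆ + ⁅x, rPlus R y⁆ - ⁅x, y⁆ := by
  simp only [rBracket, rPlus_apply, smul_lie, lie_smul, add_lie, lie_add]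
  match_scalars <;> field

theorem rBracket_eq_lie_rMinus (x y : L) :
    rBracket R x y = ⁅rMinus R x, y⁆ + ⁅x, rMinus R y⁆ + ⁅x, y⁆ := by
  simp only [rBracket, rMinus_apply, smul_lie, lie_smul, sub_lie, lie_sub]
  match_scalars <;> field

end RBracket

theorem mcybe_rPlus_rMinus_lieMorphism_general {K L : Type*} [Field K] [NeZero (2 : K)]
    [LieRing L] [LieAlgebra K L] {R : L →ₗ[K] L} (hR : SatisfiesMCYBE (1 : K) R) :
    (∀ x y : L, rPlus R (rBracket R x y) = ⁅rPlus R x, rPlus R y⁆) ∧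
    (∀ x y : L, rMinus R (rBracket R x y) = ⁅rMinus R x, rMinus R y⁆) ∧
    (∀ x y : L, ⁅rPlus R x, rPlus R y⁆
        = rPlus R (⁅rPlus R x, y⁆ + ⁅x, rPlus R y⁆ - ⁅x, y⁆)) ∧
    (∀ x y : L, ⁅rMinus R x, rMinus R y⁆
        = rMinus R (⁅rMinus R x, y⁆ + ⁅x, rMinus R y⁆ + ⁅x, y⁆)) := by
  refine ⟨hR.rPlus_rBracket, hR.rMinus_rBracket, fun x y => ?_, fun x y => ?_⟩
  · rw [← rBracket_eq_lie_rPlus, hR.rPlus_rBracket]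
  · rw [← rBracket_eq_lie_rMinus, hR.rMinus_rBracket]

/-- If `R` satisfies the modified classical Yang–Baxter equation
`[Rx,Ry] = R([Rx,y] + [x,Ry]) − [x,y]`, then `R_± := (1/2)(R ± id)` are Lie algebra morphisms
from `g_R` (with bracket `[x,y]_R := (1/2)([Rx,y] + [x,Ry])`) to `g`; equivalently,
`[R_± x, R_± y] = R_±([R_± x, y] + [x, R_± y] ∓ [x,y])` for all `x, y`. -/
theorem mcybe_rPlus_rMinus_lieMorphism
    (K : Type*) [Field K] [CharZero K]
    (L : Type*) [LieRing L] [LieAlgebra K L]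
    (R : L →ₗ[K] L)
    (hR : ∀ x y : L, ⁅R x, R y⁆ = R (⁅R x, y⁆ + ⁅x, R y⁆) - ⁅x, y⁆) :
    (∀ x y : L, rPlus R (rBracket R x y) = ⁅rPlus R x, rPlus R y⁆) ∧
    (∀ x y : L, rMinus R (rBracket R x y) = ⁅rMinus R x, rMinus R y⁆) ∧
    (∀ x y : L, ⁅rPlus R x, rPlus R y⁆
        = rPlus R (⁅rPlus R x, y⁆ + ⁅x, rPlus R y⁆ - ⁅x, y⁆)) ∧
    (∀ x y : L, ⁅rMinus R x, rMinus R y⁆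
        = rMinus R (⁅rMinus R x, y⁆ + ⁅x, rMinus R y⁆ + ⁅x, y⁆)) :=
  mcybe_rPlus_rMinus_lieMorphism_general (satisfiesMCYBE_one_iff.2 hR)
end

section
/- Let g be a Lie algebra over a field K of characteristic zero and let R : g → g satisfy the modified classical Yang–Baxter equation [Rx,Ry] = R([Rx,y] + [x,Ry]) − [x,y] for all x, y. Set R_− := (1/2)(R − id). Then the bilinear product x ▷ y := [R_− x, y] defines a left post-Lie algebra structure on g: for all x, y, z, (1) x ▷ [y,z] = [x ▷ y, z] + [y, x ▷ z], and (2) [x,y] ▷ z = a_▷(x,y,z) − a_▷(y,x,z), where a_▷(x,y,z) := x ▷ (y ▷ z) − (x ▷ y) ▷ z. -/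
/-- The product `x ▷ y := [R_− x, y]` induced by a classical `r`-matrix. -/
def rTriangleProd {K : Type*} [Field K] {L : Type*} [LieRing L] [LieAlgebra K L]
    (R : L →ₗ[K] L) (x y : L) : L :=
  ⁅rMinus R x, y⁆

/-- The associator of the product `x ▷ y := [R_− x, y]`. -/
def rTriangleAssociator {K : Type*} [Field K] {L : Type*} [LieRing L] [LieAlgebra K L]
    (R : L →ₗ[K] L) (x y z : L) : L :=
  rTriangleProd R x (rTriangleProd R y z) - rTriangleProd R (rTriangleProd R x y) z

/-!
Substituting `R = 2 P + id` turns the modified classical Yang–Baxter equation for `R` into the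
Rota–Baxter equation of weight one for `P = R_−`. For an arbitrary linear `P`, the Jacobi identity
shows that the product `x ▷ y = [P x, y]` acts by derivations and that
`a_▷(x, y, z) - a_▷(y, x, z) = [[P x, P y] - P [P x, y] - P [x, P y], z]`; the Rota–Baxter equation
says that the first entry of this bracket is `P [x, y]`.
-/

section LeftPostLie

variable {A L : Type*} [CommRing A] [LieRing L] [LieAlgebra A L]

/-- The associator `x ▷ (y ▷ z) - (x ▷ y) ▷ z` of a bilinear product `▷`, here written as a curried
bilinear map. -/
def bilinAssociator (T : L →ₗ[A] L →ₗ[A] L) (x y z : L) : L :=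
  T x (T y z) - T (T x y) z

/-- The axioms of a left post-Lie algebra for a bilinear product on a Lie algebra: left
multiplications are derivations, and the bracket measures the failure of the associator to be
symmetric in its first two arguments. -/
structure IsLeftPostLie (T : L →ₗ[A] L →ₗ[A] L) : Prop where
  apply_lie (x y z : L) : T x ⁅y, z⁆ = ⁅T x y, z⁆ + ⁅y, T x z⁆
  lie_apply (x y z : L) : T ⁅x, y⁆ z = bilinAssociator T x y z - bilinAssociator T y x z

/-- The Rota–Baxter equation of weight one for a linear endomorphism of a Lie algebra. -/
def IsRotaBaxter (P : L →ₗ[A] L) : Prop :=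
  ∀ x y : L, ⁅P x, P y⁆ = P (⁅P x, y⁆ + ⁅x, P y⁆ + ⁅x, y⁆)

/-- The modified classical Yang–Baxter equation with parameter `θ = 1`. -/
def IsModifiedYangBaxter (R : L →ₗ[A] L) : Prop :=
  ∀ x y : L, ⁅R x, R y⁆ = R (⁅R x, y⁆ + ⁅x, R y⁆) - ⁅x, y⁆

/-- The bilinear product `x ▷ y = [P x, y]` on a Lie algebra attached to a linear endomorphism
`P`. -/
def lieProdOf (P : L →ₗ[A] L) : L →ₗ[A] L →ₗ[A] L :=
  (LieAlgebra.ad A L : L →ₗ[A] Module.End A L) ∘ₗ P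

@[simp]
theorem lieProdOf_apply (P : L →ₗ[A] L) (x y : L) : lieProdOf P x y = ⁅P x, y⁆ := rfl

theorem bilinAssociator_lieProdOf_sub_swap (P : L →ₗ[A] L) (x y z : L) :
    bilinAssociator (lieProdOf P) x y z - bilinAssociator (lieProdOf P) y x z =
      ⁅⁅P x, P y⁆ - P (⁅P x, y⁆ + ⁅x, P y⁆), z⁆ := by
  simp only [bilinAssociator, lieProdOf_apply]
  rw [← lie_skew x (P y), sub_lie, lie_lie, map_add, map_neg, add_lie, neg_lie]
  abel

theorem IsRotaBaxter.isLeftPostLie_lieProdOf {P : L →ₗ[A] L} (hP : IsRotaBaxter P) :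
    IsLeftPostLie (lieProdOf P) where
  apply_lie x y z := leibniz_lie (P x) y z
  lie_apply x y z := by
    rw [bilinAssociator_lieProdOf_sub_swap, hP x y, map_add P (_ + _), add_sub_cancel_left,
      lieProdOf_apply]

theorem IsModifiedYangBaxter.isRotaBaxter_invOf_two_smul_sub_id [Invertible (2 : A)]
    {R : L →ₗ[A] L} (hR : IsModifiedYangBaxter R) :
    IsRotaBaxter ((⅟2 : A) • (R - LinearMap.id)) := by
  intro x y
  set P : L →ₗ[A] L := (⅟2 : A) • (R - LinearMap.id)
  have P_apply (u : L) : P u = (⅟2 : A) • (R u - u) := rfl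
  have lie_P_P : ⁅P x, P y⁆ = (⅟2 : A) • P (⁅R x, y⁆ + ⁅x, R y⁆) := by
    simp only [P_apply, smul_lie, lie_smul, sub_lie, lie_sub, hR x y]
    module
  have sum_eq : ⁅P x, y⁆ + ⁅x, P y⁆ + ⁅x, y⁆ = (⅟2 : A) • (⁅R x, y⁆ + ⁅x, R y⁆) := by
    have half_add_half : (⅟2 : A) • ⁅x, y⁆ + (⅟2 : A) • ⁅x, y⁆ = ⁅x, y⁆ := by
      rw [← add_smul, invOf_two_add_invOf_two, one_smul]
    simp only [P_apply, smul_lie, lie_smul, sub_lie, lie_sub]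
    nth_rw 3 [← half_add_half]
    module
  rw [lie_P_P, sum_eq, map_smul]

theorem mcybe_gives_leftPostLie_general [Invertible (2 : A)] {R : L →ₗ[A] L}
    (hR : IsModifiedYangBaxter R) :
    IsLeftPostLie (lieProdOf ((⅟2 : A) • (R - LinearMap.id))) :=
  hR.isRotaBaxter_invOf_two_smul_sub_id.isLeftPostLie_lieProdOf

end LeftPostLie

theorem rMinus_eq_invOf_two_smul {K L : Type*} [Field K] [Invertible (2 : K)] [LieRing L]
    [LieAlgebra K L] (R : L →ₗ[K] L) : rMinus R = (⅟2 : K) • (R - LinearMap.id) := by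
  rw [rMinus, one_div, invOf_eq_inv]

/-- **Statement 9.** If `R` satisfies the modified classical Yang–Baxter equation
`[Rx,Ry] = R([Rx,y] + [x,Ry]) − [x,y]`, then `x ▷ y := [R_− x, y]`, with
`R_− := (1/2)(R − id)`, defines a left post-Lie algebra structure on `g`:
(1) `x ▷ [y,z] = [x ▷ y, z] + [y, x ▷ z]` and
(2) `[x,y] ▷ z = a_▷(x,y,z) − a_▷(y,x,z)` for all `x, y, z`. -/
theorem mcybe_gives_leftPostLie
    (K : Type*) [Field K] [CharZero K]
    (L : Type*) [LieRing L] [LieAlgebra K L]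
    (R : L →ₗ[K] L)
    (hR : ∀ x y : L, ⁅R x, R y⁆ = R (⁅R x, y⁆ + ⁅x, R y⁆) - ⁅x, y⁆) :
    (∀ x y z : L, rTriangleProd R x ⁅y, z⁆
        = ⁅rTriangleProd R x y, z⁆ + ⁅y, rTriangleProd R x z⁆) ∧
    (∀ x y z : L, rTriangleProd R ⁅x, y⁆ z
        = rTriangleAssociator R x y z - rTriangleAssociator R y x z) := by
  let : Invertible (2 : K) := invertibleOfNonzero two_ne_zero
  have h : IsLeftPostLie (lieProdOf (rMinus R)) :=
    rMinus_eq_invOf_two_smul R ▸ mcybe_gives_leftPostLie_general hR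
  exact ⟨h.apply_lie, h.lie_apply⟩
end
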